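/- arXiv:2006.09921 — 6 statements merged into one kernel-verified Lean document; each statement's English description precedes it below -/
import Mathlib

section
/- Let M : ℝⁿ → Matrix (Fin n) (Fin n) ℝ be continuously differentiable with M(q) symmetric for every q ∈ ℝⁿ, and let q : ℝ → ℝⁿ be differentiable. Define, for each t ∈ ℝ, the matrix C(t) with entries C(t)ᵢⱼ = (1/2) Σₖ ( ∂M_{ij}/∂q_k + ∂M_{ik}/∂q_j − ∂M_{jk}/∂q_i )(q(t)) · q̇(t)ₖ, where ∂M_{ij}/∂q_k denotes the k-th partial derivative of the (i,j) entry of M. Then for every t, the matrix (d/dt)[M(q(t))] − 2·C(t) is skew-symmetric. -/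
open Matrix

/-- The Christoffel-symbol choice of the Coriolis matrix:
`C(q, q̇)ᵢⱼ = (1/2) Σₖ (∂M_{ij}/∂q_k + ∂M_{ik}/∂q_j − ∂M_{jk}/∂q_i)(q) · q̇ₖ`. -/
noncomputable def coriolisMatrix (n : ℕ)
    (M : (Fin n → ℝ) → Matrix (Fin n) (Fin n) ℝ) (q qd : Fin n → ℝ) :
    Matrix (Fin n) (Fin n) ℝ :=
  Matrix.of fun i j =>
    (1 / 2) * ∑ k : Fin n,
      (fderiv ℝ (fun p => M p i j) q (Pi.single k 1)
        + fderiv ℝ (fun p => M p i k) q (Pi.single j 1)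
        - fderiv ℝ (fun p => M p j k) q (Pi.single i 1)) * qd k

/-- Lemma 1 of the paper: if `M : ℝⁿ → ℝ^{n×n}` is C¹ and symmetric-valued
and `q : ℝ → ℝⁿ` is differentiable with derivative `q̇`, then
`(d/dt)[M(q(t))] − 2·C(t)` is skew-symmetric, where `C(t) = coriolisMatrix n M (q t) (q̇ t)`. -/
theorem stmt_2 (n : ℕ) (M : (Fin n → ℝ) → Matrix (Fin n) (Fin n) ℝ)
    (hM : ∀ i j, ContDiff ℝ 1 (fun p => M p i j))
    (hMsymm : ∀ p, (M p).IsSymm)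
    (q qd : ℝ → Fin n → ℝ) (hq : ∀ t, HasDerivAt q (qd t) t) :
    ∀ t : ℝ,
      ((Matrix.of fun i j => deriv (fun s => M (q s) i j) t)
          - (2 : ℝ) • coriolisMatrix n M (q t) (qd t))ᵀ
        = -((Matrix.of fun i j => deriv (fun s => M (q s) i j) t)
          - (2 : ℝ) • coriolisMatrix n M (q t) (qd t)) := by
  intro t
  have hd : ∀ i j, deriv (fun s => M (q s) i j) t
      = ∑ k : Fin n, fderiv ℝ (fun p => M p i j) (q t) (Pi.single k 1) * qd t k := by
    intro i j
    have h1 : HasFDerivAt (fun p => M p i j) (fderiv ℝ (fun p => M p i j) (q t)) (q t) :=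
      ((hM i j).differentiable (by norm_num) (q t)).hasFDerivAt
    have h2 : HasDerivAt (fun s => M (q s) i j)
        (fderiv ℝ (fun p => M p i j) (q t) (qd t)) t := h1.comp_hasDerivAt t (hq t)
    rw [h2.deriv]
    conv_lhs => rw [pi_eq_sum_univ' (qd t)]
    rw [map_sum]
    refine Finset.sum_congr rfl fun k _ => ?_
    rw [map_smul, smul_eq_mul, mul_comm]
  have hs : ∀ i j, (fun p => M p i j) = fun p => M p j i := by
    intro i j
    funext p
    exact (hMsymm p).apply j i
  ext i j
  simp only [Matrix.transpose_apply, Matrix.sub_apply, Matrix.neg_apply, Matrix.smul_apply,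
    Matrix.of_apply, coriolisMatrix, hd, smul_eq_mul, sub_mul, add_mul, Finset.sum_add_distrib,
    Finset.sum_sub_distrib]
  rw [hs j i]
  ring
end

section
/- Let M : ℝ → Matrix (Fin n) (Fin n) ℝ be differentiable with M(t) symmetric for every t, let C : ℝ → Matrix (Fin n) (Fin n) ℝ, let v : ℝ → ℝⁿ be differentiable, and let u, τ_g, τ_ext : ℝ → ℝⁿ. Suppose that for every t: (i) M(t)·v'(t) + C(t)·v(t) + τ_g(t) = u(t) + τ_ext(t), and (ii) M'(t) − 2·C(t) is skew-symmetric. Then for every t, the kinetic energy T(t) := (1/2)⟨v(t), M(t)·v(t)⟩ is differentiable with T'(t) = ⟨v(t), u(t) + τ_ext(t) − τ_g(t)⟩. -/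
open Matrix

/-- along a trajectory of the rigid-body dynamics
`M v̇ + C v + τ_g = u + τ_ext`, with `Ṁ − 2C` skew-symmetric and `M` symmetric,
the kinetic energy `T = (1/2)⟨v, M v⟩` satisfies `Ṫ = ⟨v, u + τ_ext − τ_g⟩`. -/
theorem stmt_3 (n : ℕ)
    (M M' : ℝ → Matrix (Fin n) (Fin n) ℝ)
    (hM : ∀ t i j, HasDerivAt (fun s => M s i j) (M' t i j) t)
    (hMsymm : ∀ t, (M t).IsSymm)
    (C : ℝ → Matrix (Fin n) (Fin n) ℝ)
    (v v' : ℝ → Fin n → ℝ) (hv : ∀ t, HasDerivAt v (v' t) t)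
    (u τg τext : ℝ → Fin n → ℝ)
    (hdyn : ∀ t, (M t).mulVec (v' t) + (C t).mulVec (v t) + τg t = u t + τext t)
    (hskew : ∀ t, (M' t - (2 : ℝ) • C t)ᵀ = -(M' t - (2 : ℝ) • C t)) :
    ∀ t : ℝ,
      HasDerivAt (fun s => (1 / 2) * (v s ⬝ᵥ (M s).mulVec (v s)))
        (v t ⬝ᵥ (u t + τext t - τg t)) t := by
  intro t
  have hvi : ∀ i, HasDerivAt (fun s => v s i) (v' t i) t := hasDerivAt_pi.1 (hv t)
  have hMv : ∀ i, HasDerivAt (fun s => (M s).mulVec (v s) i)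
      ((M' t).mulVec (v t) i + (M t).mulVec (v' t) i) t := by
    intro i
    simp only [Matrix.mulVec, dotProduct, ← Finset.sum_add_distrib]
    exact HasDerivAt.fun_sum fun j _ => (hM t i j).fun_mul (hvi j)
  have hT : HasDerivAt (fun s => v s ⬝ᵥ (M s).mulVec (v s))
      (v' t ⬝ᵥ (M t).mulVec (v t) +
        v t ⬝ᵥ ((M' t).mulVec (v t) + (M t).mulVec (v' t))) t := by
    simp only [dotProduct, ← Finset.sum_add_distrib]
    exact HasDerivAt.fun_sum fun i _ => (hvi i).fun_mul (hMv i)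
  have hs : v' t ⬝ᵥ (M t).mulVec (v t) = v t ⬝ᵥ (M t).mulVec (v' t) := by
    rw [dotProduct_mulVec, ← mulVec_transpose, (hMsymm t).eq, dotProduct_comm]
  have hk : v t ⬝ᵥ (M' t).mulVec (v t) = 2 * (v t ⬝ᵥ (C t).mulVec (v t)) := by
    have h : v t ⬝ᵥ (M' t - (2 : ℝ) • C t).mulVec (v t)
        = -(v t ⬝ᵥ (M' t - (2 : ℝ) • C t).mulVec (v t)) := by
      conv_lhs => rw [dotProduct_mulVec, ← mulVec_transpose, hskew t, dotProduct_comm]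
      rw [neg_mulVec, dotProduct_neg]
    simp only [sub_mulVec, smul_mulVec, dotProduct_sub, dotProduct_smul, smul_eq_mul] at h
    linarith
  have hd : u t + τext t - τg t = (M t).mulVec (v' t) + (C t).mulVec (v t) := by
    rw [← hdyn t, add_sub_cancel_right]
  refine (hT.const_mul (1 / 2 : ℝ)).congr_deriv ?_
  rw [hd, dotProduct_add, dotProduct_add, hs, hk]
  ring
end

section
/- Let M : ℝ → Matrix (Fin n) (Fin n) ℝ be differentiable with M(t) symmetric for every t, C : ℝ → Matrix (Fin n) (Fin n) ℝ, J : ℝ → Matrix (Fin 3) (Fin n) ℝ, v : ℝ → ℝⁿ differentiable, τ_g, τ_ext : ℝ → ℝⁿ, u₂ : ℝ → ℝ³, y₁, y₂ : ℝ → ℝ³ differentiable with y₁'(t) = J(t)·v(t) and y₂'(t) = u₂(t), let κ > 0, and let K_D be a symmetric n×n real matrix. Suppose for every t: (i) M'(t) − 2·C(t) is skew-symmetric, and (ii) M(t)·v'(t) + C(t)·v(t) + τ_g(t) = u(t) + τ_ext(t), where u(t) := τ_g(t) − 2κ·J(t)ᵀ·(y₁(t) − y₂(t)) − K_D·(v(t)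 − J(t)ᵀ·u₂(t)) is the energy-shaping interface. Then the closed-loop Hamiltonian H(t) := (1/2)⟨v(t), M(t)·v(t)⟩ + κ·‖y₁(t) − y₂(t)‖² satisfies, for all t, H'(t) = ⟨J(t)·K_D·v(t), u₂(t)⟩ + ⟨v(t), τ_ext(t)⟩ − 2κ·⟨y₁(t) − y₂(t), u₂(t)⟩ − ⟨v(t), K_D·v(t)⟩. -/
open Matrix

/-- Hamiltonian derivative identity, eq. (13) of the paper:
under the dynamics `M v̇ + C v + τ_g = u + τ_ext` with the energy-shaping interface
`u = τ_g − 2κ Jᵀ(y₁ − y₂) − K_D(v − Jᵀ u₂)`, `Ṁ − 2C` skew-symmetric, `M`, `K_D`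
symmetric, `ẏ₁ = J v`, `ẏ₂ = u₂`, the closed-loop Hamiltonian
`H = (1/2)⟨v, M v⟩ + κ‖y₁ − y₂‖²` satisfies
`Ḣ = ⟨J K_D v, u₂⟩ + ⟨v, τ_ext⟩ − 2κ⟨y₁ − y₂, u₂⟩ − ⟨v, K_D v⟩`. -/
theorem stmt_4 (n : ℕ)
    (M M' : ℝ → Matrix (Fin n) (Fin n) ℝ)
    (hM : ∀ t i j, HasDerivAt (fun s => M s i j) (M' t i j) t)
    (hMsymm : ∀ t, (M t).IsSymm)
    (C : ℝ → Matrix (Fin n) (Fin n) ℝ)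
    (J : ℝ → Matrix (Fin 3) (Fin n) ℝ)
    (v v' : ℝ → Fin n → ℝ) (hv : ∀ t, HasDerivAt v (v' t) t)
    (τg τext : ℝ → Fin n → ℝ)
    (u₂ : ℝ → EuclideanSpace ℝ (Fin 3))
    (y₁ y₂ : ℝ → EuclideanSpace ℝ (Fin 3))
    (hy₁ : ∀ t, HasDerivAt y₁ (WithLp.toLp 2 ((J t).mulVec (v t))) t)
    (hy₂ : ∀ t, HasDerivAt y₂ (u₂ t) t)
    (κ : ℝ) (hκ : 0 < κ)
    (K_D : Matrix (Fin n) (Fin n) ℝ) (hKD : K_D.IsSymm)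
    (hskew : ∀ t, (M' t - (2 : ℝ) • C t)ᵀ = -(M' t - (2 : ℝ) • C t))
    (hdyn : ∀ t, (M t).mulVec (v' t) + (C t).mulVec (v t) + τg t =
      (τg t - (2 * κ) • (J t)ᵀ.mulVec (y₁ t - y₂ t)
        - K_D.mulVec (v t - (J t)ᵀ.mulVec (u₂ t))) + τext t) :
    ∀ t : ℝ,
      HasDerivAt
        (fun s => (1 / 2) * (v s ⬝ᵥ (M s).mulVec (v s)) + κ * ‖y₁ s - y₂ s‖ ^ 2)
        ((J t).mulVec (K_D.mulVec (v t)) ⬝ᵥ u₂ t + v t ⬝ᵥ τext t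
          - 2 * κ * ((y₁ t - y₂ t) ⬝ᵥ u₂ t) - v t ⬝ᵥ K_D.mulVec (v t)) t := by
  intro t
  have hvi : ∀ i, HasDerivAt (fun s => v s i) (v' t i) t := fun i => (hasDerivAt_pi.1 (hv t)) i
  have h1 : HasDerivAt (fun s => v s ⬝ᵥ (M s).mulVec (v s))
      (v' t ⬝ᵥ (M t).mulVec (v t) + v t ⬝ᵥ ((M' t).mulVec (v t) + (M t).mulVec (v' t))) t := by
    have hmv : ∀ i, HasDerivAt (fun s => (M s).mulVec (v s) i)
        (((M' t).mulVec (v t) + (M t).mulVec (v' t)) i) t := by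
      intro i
      have := HasDerivAt.fun_sum (u := Finset.univ) (fun j _ => (hM t i j).fun_mul (hvi j))
      simpa [Matrix.mulVec, dotProduct, Finset.sum_add_distrib] using this
    have := HasDerivAt.fun_sum (u := Finset.univ) (fun i _ => (hvi i).fun_mul (hmv i))
    rw [Finset.sum_add_distrib] at this
    exact this
  have h2 := ((hy₁ t).fun_sub (hy₂ t)).norm_sq
  have h3 := (h1.const_mul (1 / 2)).fun_add (h2.const_mul κ)
  refine h3.congr_deriv ?_
  have hin : inner ℝ (y₁ t - y₂ t) (WithLp.toLp 2 ((J t).mulVec (v t)) - u₂ t)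
      = v t ⬝ᵥ (J t)ᵀ.mulVec (y₁ t - y₂ t) - (y₁ t - y₂ t) ⬝ᵥ u₂ t := by
    rw [Matrix.mulVec_transpose, dotProduct_comm (v t), ← Matrix.dotProduct_mulVec,
      WithLp.ofLp_sub, ← dotProduct_sub, EuclideanSpace.inner_eq_star_dotProduct, dotProduct_comm]
    simp
  rw [hin]
  have hsym : v' t ⬝ᵥ (M t).mulVec (v t) = v t ⬝ᵥ (M t).mulVec (v' t) := by
    rw [Matrix.dotProduct_mulVec, ← Matrix.mulVec_transpose, (hMsymm t).eq, dotProduct_comm]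
  have hK : v t ⬝ᵥ K_D.mulVec ((J t)ᵀ.mulVec (u₂ t)) =
      (J t).mulVec (K_D.mulVec (v t)) ⬝ᵥ u₂ t := by
    rw [Matrix.dotProduct_mulVec, ← Matrix.mulVec_transpose, hKD.eq, Matrix.dotProduct_mulVec,
      Matrix.vecMul_transpose]
  have hS : v t ⬝ᵥ (M' t).mulVec (v t) = 2 * (v t ⬝ᵥ (C t).mulVec (v t)) := by
    have e : v t ⬝ᵥ (M' t - (2 : ℝ) • C t)ᵀ.mulVec (v t)
        = v t ⬝ᵥ (M' t - (2 : ℝ) • C t).mulVec (v t) := by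
      rw [Matrix.mulVec_transpose, dotProduct_comm, ← Matrix.dotProduct_mulVec]
    rw [hskew t, Matrix.neg_mulVec, dotProduct_neg, Matrix.sub_mulVec, Matrix.smul_mulVec,
      dotProduct_sub, dotProduct_smul, smul_eq_mul] at e
    linarith
  have hd := congrArg (fun w => v t ⬝ᵥ w) (hdyn t)
  simp only [dotProduct_add, dotProduct_sub, dotProduct_smul, Matrix.mulVec_sub, smul_eq_mul,
    hK] at hd ⊢
  rw [hsym, hS]
  linarith
end

section
/- Under the hypotheses of the Hamiltonian derivative identity — M : ℝ → Matrix (Fin n) (Fin n) ℝ differentiable symmetric-valued, C : ℝ → Matrix (Fin n) (Fin n) ℝ with M'(t) − 2C(t) skew-symmetric, J : ℝ → Matrix (Fin 3) (Fin n) ℝ, v : ℝ → ℝⁿ differentiable, y₁, y₂ : ℝ → ℝ³ differentiable with y₁' = J·v and y₂' = u₂, κ > 0, K_D symmetric, dynamics M·v' + C·v + τ_g = u + τ_ext with interface u = τ_g − 2κ·Jᵀ(y₁ − y₂) − K_D(v − Jᵀu₂) — assume additionally that K_D is positive semidefinite. Then the closed-loop Hamiltonian H(t) := (1/2)⟨v(t),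 M(t)v(t)⟩ + κ‖y₁(t) − y₂(t)‖² satisfies H'(t) ≤ ⟨J(t)·K_D·v(t) − 2κ·(y₁(t) − y₂(t)), u₂(t)⟩ + ⟨v(t), τ_ext(t)⟩ for all t. In particular, if u₂ ≡ 0 then H'(t) ≤ ⟨v(t), τ_ext(t)⟩ (passivity from external disturbance torques to generalized velocity), and if τ_ext ≡ 0 then H'(t) ≤ ⟨J(t)·K_D·v(t) − 2κ·(y₁(t) − y₂(t)), u₂(t)⟩. -/
open Matrix

/-- Corollary 1 of the paper, passivity: under the hypotheses of the
Hamiltonian derivative identity, with `K_D` additionally positive semidefinite, the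
closed-loop Hamiltonian `H = (1/2)⟨v, M v⟩ + κ‖y₁ − y₂‖²` satisfies
`Ḣ ≤ ⟨J K_D v − 2κ(y₁ − y₂), u₂⟩ + ⟨v, τ_ext⟩`; in particular `Ḣ ≤ ⟨v, τ_ext⟩` when
`u₂ ≡ 0`, and `Ḣ ≤ ⟨J K_D v − 2κ(y₁ − y₂), u₂⟩` when `τ_ext ≡ 0`. -/
theorem stmt_5 (n : ℕ)
    (M M' : ℝ → Matrix (Fin n) (Fin n) ℝ)
    (hM : ∀ t i j, HasDerivAt (fun s => M s i j) (M' t i j) t)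
    (hMsymm : ∀ t, (M t).IsSymm)
    (C : ℝ → Matrix (Fin n) (Fin n) ℝ)
    (J : ℝ → Matrix (Fin 3) (Fin n) ℝ)
    (v v' : ℝ → Fin n → ℝ) (hv : ∀ t, HasDerivAt v (v' t) t)
    (τg τext : ℝ → Fin n → ℝ)
    (u₂ : ℝ → EuclideanSpace ℝ (Fin 3))
    (y₁ y₂ : ℝ → EuclideanSpace ℝ (Fin 3))
    (hy₁ : ∀ t, HasDerivAt y₁ (WithLp.toLp 2 ((J t).mulVec (v t))) t)
    (hy₂ : ∀ t, HasDerivAt y₂ (u₂ t) t)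
    (κ : ℝ) (hκ : 0 < κ)
    (K_D : Matrix (Fin n) (Fin n) ℝ) (hKD : K_D.IsSymm) (hKDpsd : K_D.PosSemidef)
    (hskew : ∀ t, (M' t - (2 : ℝ) • C t)ᵀ = -(M' t - (2 : ℝ) • C t))
    (hdyn : ∀ t, (M t).mulVec (v' t) + (C t).mulVec (v t) + τg t =
      (τg t - (2 * κ) • (J t)ᵀ.mulVec (y₁ t - y₂ t)
        - K_D.mulVec (v t - (J t)ᵀ.mulVec (u₂ t))) + τext t) :
    (∀ t : ℝ,
      deriv (fun s => (1 / 2) * (v s ⬝ᵥ (M s).mulVec (v s)) + κ * ‖y₁ s - y₂ s‖ ^ 2) t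
        ≤ ((J t).mulVec (K_D.mulVec (v t)) - (2 * κ) • fun i => (y₁ t - y₂ t) i) ⬝ᵥ u₂ t
          + v t ⬝ᵥ τext t)
    ∧ ((∀ t, u₂ t = 0) → ∀ t : ℝ,
      deriv (fun s => (1 / 2) * (v s ⬝ᵥ (M s).mulVec (v s)) + κ * ‖y₁ s - y₂ s‖ ^ 2) t
        ≤ v t ⬝ᵥ τext t)
    ∧ ((∀ t, τext t = 0) → ∀ t : ℝ,
      deriv (fun s => (1 / 2) * (v s ⬝ᵥ (M s).mulVec (v s)) + κ * ‖y₁ s - y₂ s‖ ^ 2) t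
        ≤ ((J t).mulVec (K_D.mulVec (v t)) - (2 * κ) • fun i => (y₁ t - y₂ t) i) ⬝ᵥ u₂ t) := by
  have key : ∀ t : ℝ,
      deriv (fun s => (1 / 2) * (v s ⬝ᵥ (M s).mulVec (v s)) + κ * ‖y₁ s - y₂ s‖ ^ 2) t
        ≤ ((J t).mulVec (K_D.mulVec (v t)) - (2 * κ) • fun i => (y₁ t - y₂ t) i) ⬝ᵥ u₂ t
          + v t ⬝ᵥ τext t := by
    intro t
    have hvi : ∀ i, HasDerivAt (fun s => v s i) (v' t i) t := hasDerivAt_pi.1 (hv t)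
    have hq : HasDerivAt (fun s => v s ⬝ᵥ (M s).mulVec (v s))
        (v' t ⬝ᵥ (M t).mulVec (v t) + v t ⬝ᵥ ((M' t).mulVec (v t) + (M t).mulVec (v' t))) t := by
      have h : HasDerivAt (fun s => ∑ i, v s i * ∑ j, M s i j * v s j)
          (∑ i, (v' t i * (∑ j, M t i j * v t j)
            + v t i * ∑ j, (M' t i j * v t j + M t i j * v' t j))) t := by
        refine HasDerivAt.fun_sum fun i _ => (hvi i).fun_mul ?_
        exact HasDerivAt.fun_sum fun j _ => (hM t i j).fun_mul (hvi j)
      refine h.congr_deriv ?_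
      simp only [dotProduct, mulVec, Pi.add_apply, Finset.sum_add_distrib, mul_add]
    have hn := ((hy₁ t).fun_sub (hy₂ t)).norm_sq
    have hH := (hq.const_mul (1 / 2)).fun_add (hn.const_mul κ)
    rw [hH.deriv]
    have h1 : v' t ⬝ᵥ (M t).mulVec (v t) = v t ⬝ᵥ (M t).mulVec (v' t) := by
      rw [dotProduct_mulVec, ← mulVec_transpose, (hMsymm t).eq, dotProduct_comm]
    have h2 : v t ⬝ᵥ (M' t).mulVec (v t) = 2 * (v t ⬝ᵥ (C t).mulVec (v t)) := by
      have h := congrArg (fun A => v t ⬝ᵥ A.mulVec (v t)) (hskew t)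
      simp only [mulVec_transpose, neg_mulVec, dotProduct_neg] at h
      rw [dotProduct_comm, ← dotProduct_mulVec, sub_mulVec, smul_mulVec, dotProduct_sub,
        dotProduct_smul, smul_eq_mul] at h
      linarith
    have h3 := congrArg (fun w => v t ⬝ᵥ w) (hdyn t)
    simp only [dotProduct_add, dotProduct_sub, dotProduct_smul, smul_eq_mul, mulVec_sub] at h3
    have h4 : ∀ w : Fin 3 → ℝ, v t ⬝ᵥ (J t)ᵀ.mulVec w = (J t).mulVec (v t) ⬝ᵥ w := by
      intro w
      rw [dotProduct_mulVec, vecMul_transpose]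
    have h5 : ∀ w : Fin 3 → ℝ, v t ⬝ᵥ K_D.mulVec ((J t)ᵀ.mulVec w)
        = (J t).mulVec (K_D.mulVec (v t)) ⬝ᵥ w := by
      intro w
      rw [dotProduct_mulVec, ← mulVec_transpose, hKD.eq, dotProduct_mulVec, vecMul_transpose]
    have h6 : 0 ≤ v t ⬝ᵥ K_D.mulVec (v t) := by
      simpa using hKDpsd.dotProduct_mulVec_nonneg (v t)
    have h7 : inner ℝ (y₁ t - y₂ t) (WithLp.toLp 2 ((J t).mulVec (v t)) - u₂ t)
        = (J t).mulVec (v t) ⬝ᵥ (y₁ t).ofLp - (J t).mulVec (v t) ⬝ᵥ (y₂ t).ofLp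
          - ((y₁ t).ofLp ⬝ᵥ (u₂ t).ofLp - (y₂ t).ofLp ⬝ᵥ (u₂ t).ofLp) := by
      simp only [EuclideanSpace.inner_eq_star_dotProduct, WithLp.ofLp_sub, star_trivial,
        dotProduct_sub, sub_dotProduct, dotProduct_comm (u₂ t).ofLp]
      ring
    have h8 : (fun i => (y₁ t - y₂ t) i) = (y₁ t).ofLp - (y₂ t).ofLp := rfl
    rw [h7, h8]
    simp only [h4, h5] at h3
    simp only [dotProduct_add, h1, h2, sub_dotProduct, smul_dotProduct, smul_eq_mul]
    linarith
  refine ⟨key, fun h t => ?_, fun h t => ?_⟩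
  · simpa [h t] using key t
  · simpa [h t] using key t
end

section
/- Let n ≥ 1, κ > 0, m > 0, α > 0. Let M : ℝ → Matrix (Fin n) (Fin n) ℝ be differentiable with M(t) symmetric positive definite for all t, C : ℝ → Matrix (Fin n) (Fin n) ℝ with M'(t) − 2C(t) skew-symmetric for all t, J : ℝ → Matrix (Fin 3) (Fin n) ℝ differentiable with J(t)·M(t)⁻¹·J(t)ᵀ = (1/m)·I₃ for all t, v : ℝ → ℝⁿ differentiable, τ_g, τ_ext : ℝ → ℝⁿ, u₂ : ℝ → ℝ³, and y₁, y₂ : ℝ → ℝ³ differentiable with y₁' = J·v and y₂' = u₂. Let K_D be a symmetric positive definite n×n matrix, and assume the dynamics M(t)v'(t) + C(t)v(t) + τ_g(t) = u(t) + τ_ext(t) hold with the interface u(t) = τ_g(t) − 2κ·J(t)ᵀ(y₁(t) − y₂(t)) − K_D(v(t) − J(t)ᵀu₂(t)). Assume furthermore that (1/κ)·K_D − α·m·J(t)ᵀJ(t) − α·M(t) is positive semidefinite for all t. Define V(t) := (1/(2κ))⟨v(t), M(t)v(t)⟩ + ‖y₁(t) − y₂(t)‖² + α·m·⟨J(t)v(t),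 y₁(t) − y₂(t)⟩, and define OT(t) := ⟨z₁(t), y₁(t) − y₂(t)⟩ + ⟨z₂(t), u₂(t)⟩ + (1/κ)⟨v(t), τ_ext(t)⟩, where z₁(t) := −2u₂(t) + α·m·J'(t)v(t) + α·m·J(t)M(t)⁻¹K_D(J(t)ᵀu₂(t) − v(t)) + α·m·J(t)M(t)⁻¹(τ_ext(t) − C(t)v(t)) + 2α²κ·m·J(t)v(t), and z₂(t) := (1/κ)·J(t)K_D v(t) − α·m·J(t)v(t). Then for all t, V'(t) ≤ −2ακ·V(t) + OT(t). -/
open Matrix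

lemma hasDerivAt_dot {k : ℕ} {f g : ℝ → Fin k → ℝ} {f' g' : Fin k → ℝ} {t : ℝ}
    (hf : HasDerivAt f f' t) (hg : HasDerivAt g g' t) :
    HasDerivAt (fun s => f s ⬝ᵥ g s) (f' ⬝ᵥ g t + f t ⬝ᵥ g') t := by
  rw [hasDerivAt_pi] at hf hg
  have := HasDerivAt.fun_sum (u := Finset.univ) (fun i _ => (hf i).mul (hg i))
  simp only [dotProduct, ← Finset.sum_add_distrib]
  exact this

lemma hasDerivAt_mv {k l : ℕ} {A : ℝ → Matrix (Fin k) (Fin l) ℝ} {A' : Matrix (Fin k) (Fin l) ℝ}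
    {g : ℝ → Fin l → ℝ} {g' : Fin l → ℝ} {t : ℝ}
    (hA : ∀ i j, HasDerivAt (fun s => A s i j) (A' i j) t) (hg : HasDerivAt g g' t) :
    HasDerivAt (fun s => (A s).mulVec (g s)) (A'.mulVec (g t) + (A t).mulVec g') t := by
  rw [hasDerivAt_pi]
  intro i
  exact hasDerivAt_dot (f := fun s => A s i) (hasDerivAt_pi.2 (hA i)) hg

/-- Pointwise algebraic core. -/
lemma core {n : ℕ} {κ m α : ℝ} (hκ : 0 < κ) (hm : 0 < m)
    (M M' C K : Matrix (Fin n) (Fin n) ℝ) (J J' : Matrix (Fin 3) (Fin n) ℝ)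
    (hMs : M.IsSymm) (hMpd : M.PosDef) (hskew : (M' - (2 : ℝ) • C)ᵀ = -(M' - (2 : ℝ) • C))
    (hJM : J * M⁻¹ * Jᵀ = (1 / m) • (1 : Matrix (Fin 3) (Fin 3) ℝ))
    (v v' τ : Fin n → ℝ) (w e : Fin 3 → ℝ) (hK : K.IsSymm)
    (hdyn : M *ᵥ v' = τ - C *ᵥ v + K *ᵥ (Jᵀ *ᵥ w - v) - (2 * κ) • (Jᵀ *ᵥ e))
    (hpsd : ((1 / κ) • K - (α * m) • (Jᵀ * J) - α • M).PosSemidef) :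
    (1 / (2 * κ)) * (v' ⬝ᵥ M *ᵥ v + v ⬝ᵥ (M' *ᵥ v + M *ᵥ v'))
      + ((J *ᵥ v - w) ⬝ᵥ e + e ⬝ᵥ (J *ᵥ v - w))
      + (α * m) * ((J' *ᵥ v + J *ᵥ v') ⬝ᵥ e + J *ᵥ v ⬝ᵥ (J *ᵥ v - w))
    ≤ -(2 * α * κ) * ((1 / (2 * κ)) * (v ⬝ᵥ M *ᵥ v) + e ⬝ᵥ e + (α * m) * (J *ᵥ v ⬝ᵥ e))
      + (((-2 : ℝ) • w + (α * m) • J' *ᵥ v + (α * m) • J *ᵥ (M⁻¹ *ᵥ (K *ᵥ (Jᵀ *ᵥ w - v)))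
          + (α * m) • J *ᵥ (M⁻¹ *ᵥ (τ - C *ᵥ v)) + (2 * α ^ 2 * κ * m) • J *ᵥ v) ⬝ᵥ e
        + ((1 / κ) • J *ᵥ (K *ᵥ v) - (α * m) • J *ᵥ v) ⬝ᵥ w + (1 / κ) * (v ⬝ᵥ τ)) := by
  have hdet : IsUnit M.det := (Matrix.isUnit_iff_isUnit_det _).1 hMpd.isUnit
  have adj : ∀ (x : Fin n → ℝ) (z : Fin 3 → ℝ), x ⬝ᵥ Jᵀ *ᵥ z = J *ᵥ x ⬝ᵥ z := by
    intro x z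
    rw [Matrix.dotProduct_mulVec, Matrix.vecMul_transpose]
  have symM : v' ⬝ᵥ M *ᵥ v = v ⬝ᵥ M *ᵥ v' := by
    rw [Matrix.dotProduct_mulVec, ← Matrix.mulVec_transpose, hMs.eq, dotProduct_comm]
  have symK : ∀ x, v ⬝ᵥ K *ᵥ x = K *ᵥ v ⬝ᵥ x := by
    intro x
    rw [Matrix.dotProduct_mulVec, ← Matrix.mulVec_transpose, hK.eq]
  have sk : v ⬝ᵥ M' *ᵥ v = 2 * (v ⬝ᵥ C *ᵥ v) := by
    have h1 : v ⬝ᵥ (M' - (2 : ℝ) • C) *ᵥ v = -(v ⬝ᵥ (M' - (2 : ℝ) • C) *ᵥ v) := by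
      conv_lhs => rw [Matrix.dotProduct_mulVec, ← Matrix.mulVec_transpose, hskew,
        dotProduct_comm, Matrix.neg_mulVec, dotProduct_neg]
    rw [Matrix.sub_mulVec, Matrix.smul_mulVec, dotProduct_sub, dotProduct_smul, smul_eq_mul] at h1
    linarith
  have hJv' : J *ᵥ v' = J *ᵥ (M⁻¹ *ᵥ (τ - C *ᵥ v)) + J *ᵥ (M⁻¹ *ᵥ (K *ᵥ (Jᵀ *ᵥ w - v)))
      - (2 * κ / m) • e := by
    have h1 : v' = M⁻¹ *ᵥ (M *ᵥ v') := by
      rw [Matrix.mulVec_mulVec, Matrix.nonsing_inv_mul _ hdet, Matrix.one_mulVec]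
    have h2 : J *ᵥ (M⁻¹ *ᵥ (Jᵀ *ᵥ e)) = (1 / m) • e := by
      rw [Matrix.mulVec_mulVec, Matrix.mulVec_mulVec, hJM, Matrix.smul_mulVec, Matrix.one_mulVec]
    rw [h1, hdyn, Matrix.mulVec_sub M⁻¹, Matrix.mulVec_add M⁻¹, Matrix.mulVec_sub J,
      Matrix.mulVec_add J, Matrix.mulVec_smul, Matrix.mulVec_smul, h2, smul_smul]
    congr 2
    ring
  have hvM : v ⬝ᵥ M *ᵥ v' = v ⬝ᵥ τ - v ⬝ᵥ C *ᵥ v + (J *ᵥ (K *ᵥ v) ⬝ᵥ w - v ⬝ᵥ K *ᵥ v)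
      - 2 * κ * (J *ᵥ v ⬝ᵥ e) := by
    rw [hdyn, dotProduct_sub, dotProduct_add, dotProduct_sub, dotProduct_smul, adj,
      Matrix.mulVec_sub, dotProduct_sub, symK, adj, smul_eq_mul]
  have hp : 0 ≤ (1 / κ) * (v ⬝ᵥ K *ᵥ v) - (α * m) * (J *ᵥ v ⬝ᵥ J *ᵥ v) - α * (v ⬝ᵥ M *ᵥ v) := by
    have := hpsd.dotProduct_mulVec_nonneg v
    simp only [star_trivial, Matrix.sub_mulVec, Matrix.smul_mulVec, dotProduct_sub,
      dotProduct_smul, smul_eq_mul, ← Matrix.mulVec_mulVec, adj] at this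
    exact this
  rw [hJv', symM, dotProduct_add v, sk, hvM]
  simp only [dotProduct_sub, sub_dotProduct, add_dotProduct, smul_dotProduct, smul_eq_mul,
    dotProduct_comm e (J *ᵥ v), dotProduct_comm e w]
  generalize J *ᵥ (M⁻¹ *ᵥ (τ - C *ᵥ v)) ⬝ᵥ e = a1 at *
  generalize J *ᵥ (M⁻¹ *ᵥ (K *ᵥ (Jᵀ *ᵥ w - v))) ⬝ᵥ e = a2 at *
  rw [← sub_nonneg]
  refine hp.trans_eq ?_
  field_simp
  ring

/-- key dissipation inequality in the proof of Theorem 1: under the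
energy-shaping interface, with `J M⁻¹ Jᵀ = (1/m) I₃` and
`(1/κ)K_D − αm JᵀJ − αM ⪰ 0`, the Lyapunov-like function
`V = (1/(2κ))⟨v, M v⟩ + ‖y₁ − y₂‖² + αm⟨J v, y₁ − y₂⟩` satisfies
`V̇ ≤ −2ακ V + OT` where `OT = ⟨z₁, y₁ − y₂⟩ + ⟨z₂, u₂⟩ + (1/κ)⟨v, τ_ext⟩`. -/
theorem stmt_6 (n : ℕ) (hn : 1 ≤ n) (κ m α : ℝ) (hκ : 0 < κ) (hm : 0 < m) (hα : 0 < α)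
    (M M' : ℝ → Matrix (Fin n) (Fin n) ℝ)
    (hM : ∀ t i j, HasDerivAt (fun s => M s i j) (M' t i j) t)
    (hMsymm : ∀ t, (M t).IsSymm) (hMpd : ∀ t, (M t).PosDef)
    (C : ℝ → Matrix (Fin n) (Fin n) ℝ)
    (hskew : ∀ t, (M' t - (2 : ℝ) • C t)ᵀ = -(M' t - (2 : ℝ) • C t))
    (J J' : ℝ → Matrix (Fin 3) (Fin n) ℝ)
    (hJ : ∀ t i j, HasDerivAt (fun s => J s i j) (J' t i j) t)
    (hJM : ∀ t, J t * (M t)⁻¹ * (J t)ᵀ = (1 / m) • (1 : Matrix (Fin 3) (Fin 3) ℝ))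
    (v v' : ℝ → Fin n → ℝ) (hv : ∀ t, HasDerivAt v (v' t) t)
    (τg τext : ℝ → Fin n → ℝ)
    (u₂ : ℝ → EuclideanSpace ℝ (Fin 3))
    (y₁ y₂ : ℝ → EuclideanSpace ℝ (Fin 3))
    (hy₁ : ∀ t, HasDerivAt y₁ (WithLp.toLp 2 ((J t).mulVec (v t))) t)
    (hy₂ : ∀ t, HasDerivAt y₂ (u₂ t) t)
    (K_D : Matrix (Fin n) (Fin n) ℝ) (hKD : K_D.IsSymm) (hKDpd : K_D.PosDef)
    (hdyn : ∀ t, (M t).mulVec (v' t) + (C t).mulVec (v t) + τg t =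
      (τg t - (2 * κ) • (J t)ᵀ.mulVec (y₁ t - y₂ t)
        - K_D.mulVec (v t - (J t)ᵀ.mulVec (u₂ t))) + τext t)
    (hpsd : ∀ t, ((1 / κ) • K_D - (α * m) • ((J t)ᵀ * J t) - α • M t).PosSemidef) :
    ∀ t : ℝ,
      deriv (fun s =>
        (1 / (2 * κ)) * (v s ⬝ᵥ (M s).mulVec (v s)) + ‖y₁ s - y₂ s‖ ^ 2
          + (α * m) * ((J s).mulVec (v s) ⬝ᵥ (y₁ s - y₂ s))) t
      ≤ -(2 * α * κ) *
          ((1 / (2 * κ)) * (v t ⬝ᵥ (M t).mulVec (v t)) + ‖y₁ t - y₂ t‖ ^ 2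
            + (α * m) * ((J t).mulVec (v t) ⬝ᵥ (y₁ t - y₂ t)))
        + (((-2 : ℝ) • (fun i => u₂ t i)
            + (α * m) • (J' t).mulVec (v t)
            + (α * m) • (J t).mulVec ((M t)⁻¹.mulVec
                (K_D.mulVec ((J t)ᵀ.mulVec (u₂ t) - v t)))
            + (α * m) • (J t).mulVec ((M t)⁻¹.mulVec (τext t - (C t).mulVec (v t)))
            + (2 * α ^ 2 * κ * m) • (J t).mulVec (v t)) ⬝ᵥ (y₁ t - y₂ t)
          + ((1 / κ) • (J t).mulVec (K_D.mulVec (v t))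
              - (α * m) • (J t).mulVec (v t)) ⬝ᵥ u₂ t
          + (1 / κ) * (v t ⬝ᵥ τext t)) := by
  intro t
  have hE : HasDerivAt (fun s => (y₁ s - y₂ s).ofLp) ((J t).mulVec (v t) - (u₂ t).ofLp) t :=
    (PiLp.continuousLinearEquiv 2 ℝ (fun _ : Fin 3 => ℝ)).toContinuousLinearMap.hasFDerivAt.comp_hasDerivAt
      t ((hy₁ t).sub (hy₂ t))
  have hnorm : ∀ s, ‖y₁ s - y₂ s‖ ^ 2 = (y₁ s - y₂ s).ofLp ⬝ᵥ (y₁ s - y₂ s).ofLp := by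
    intro s
    rw [EuclideanSpace.real_norm_sq_eq]
    simp only [dotProduct, sq]
  have hV := (((hasDerivAt_dot (hv t) (hasDerivAt_mv (hM t) (hv t))).const_mul (1 / (2 * κ))).add
    (hasDerivAt_dot hE hE)).add
    ((hasDerivAt_dot (hasDerivAt_mv (hJ t) (hv t)) hE).const_mul (α * m))
  have hc := core (α := α) hκ hm (M t) (M' t) (C t) K_D (J t) (J' t) (hMsymm t) (hMpd t) (hskew t)
    (hJM t) (v t) (v' t) (τext t) (u₂ t).ofLp (y₁ t - y₂ t).ofLp hKD (by
      have h := hdyn t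
      rw [← eq_sub_iff_add_eq, ← eq_sub_iff_add_eq] at h
      rw [h]
      simp only [WithLp.ofLp_sub, Matrix.mulVec_sub K_D]
      abel) (hpsd t)
  simp only [hnorm]
  refine (le_of_eq ?_).trans hc
  exact hV.deriv
end

section
/- Let K be an n×n real matrix and μ < 0 be such that (1/2)(K + Kᵀ) − μ·I is negative semidefinite (i.e., the symmetric part of K has all eigenvalues at most μ). Let δ ≥ 0, let p, x₂ : ℝ → ℝⁿ be differentiable, let v, d : ℝ → ℝⁿ with ‖d(t)‖ ≤ δ for all t ≥ 0, and suppose p'(t) = v(t) and x₂'(t) = v(t) + K·(x₂(t) − p(t)) + d(t) for all t. Then the error e(t) := x₂(t) − p(t) satisfies e'(t) = K·e(t) + d(t), and ‖e(t)‖ ≤ max( ‖e(0)‖, δ / (−μ) ) for all t ≥ 0. -/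
open Matrix

lemma quad_aux (n : ℕ) (K : Matrix (Fin n) (Fin n) ℝ) (μ : ℝ)
    (hK : (μ • (1 : Matrix (Fin n) (Fin n) ℝ)
      - (1 / 2 : ℝ) • (K + Kᵀ)).PosSemidef) (e : EuclideanSpace ℝ (Fin n)) :
    inner ℝ e ((EuclideanSpace.equiv (Fin n) ℝ).symm (K.mulVec e)) ≤ μ * ‖e‖ ^ 2 := by
  have h := hK.dotProduct_mulVec_nonneg (e : Fin n → ℝ)
  have h1 : inner ℝ e ((EuclideanSpace.equiv (Fin n) ℝ).symm (K.mulVec e))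
      = (e : Fin n → ℝ) ⬝ᵥ (K.mulVec e) := by
    rw [dotProduct_comm]
    simp [PiLp.inner_apply, dotProduct]
  have h2 : ‖e‖ ^ 2 = (e : Fin n → ℝ) ⬝ᵥ (e : Fin n → ℝ) := by
    rw [EuclideanSpace.norm_sq_eq]
    simp [dotProduct, sq]
  have h3 : (e : Fin n → ℝ) ⬝ᵥ (Kᵀ.mulVec e) = (e : Fin n → ℝ) ⬝ᵥ (K.mulVec e) := by
    rw [Matrix.mulVec_transpose, dotProduct_comm, Matrix.dotProduct_mulVec]
  rw [h1, h2]
  simp only [star_trivial, Matrix.sub_mulVec, Matrix.smul_mulVec, Matrix.one_mulVec,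
    Matrix.add_mulVec, dotProduct_sub, dotProduct_smul, dotProduct_add, h3, smul_eq_mul] at h
  linarith

/-- linear LIP–CoM interface: if the symmetric part of `K` has all
eigenvalues at most `μ < 0` (i.e. `(1/2)(K + Kᵀ) − μI` is negative semidefinite),
`‖d(t)‖ ≤ δ`, `p' = v`, and `x₂' = v + K(x₂ − p) + d`, then the error `e = x₂ − p`
satisfies `e' = K e + d` and `‖e(t)‖ ≤ max(‖e(0)‖, δ/(−μ))` for all `t ≥ 0`. -/
theorem stmt_10 (n : ℕ) (K : Matrix (Fin n) (Fin n) ℝ) (μ : ℝ) (hμ : μ < 0)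
    (hK : (μ • (1 : Matrix (Fin n) (Fin n) ℝ)
      - (1 / 2 : ℝ) • (K + Kᵀ)).PosSemidef)
    (δ : ℝ) (hδ : 0 ≤ δ)
    (p x₂ : ℝ → EuclideanSpace ℝ (Fin n))
    (hp : Differentiable ℝ p) (hx₂ : Differentiable ℝ x₂)
    (v d : ℝ → EuclideanSpace ℝ (Fin n))
    (hd : ∀ t ≥ (0 : ℝ), ‖d t‖ ≤ δ)
    (hp' : ∀ t, HasDerivAt p (v t) t)
    (hx₂' : ∀ t, HasDerivAt x₂ (v t + (EuclideanSpace.equiv (Fin n) ℝ).symm (K.mulVec (x₂ t - p t)) + d t) t) :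
    (∀ t : ℝ, HasDerivAt (fun s => x₂ s - p s) ((EuclideanSpace.equiv (Fin n) ℝ).symm (K.mulVec (x₂ t - p t)) + d t) t)
    ∧ ∀ t ≥ (0 : ℝ), ‖x₂ t - p t‖ ≤ max ‖x₂ 0 - p 0‖ (δ / (-μ)) := by
  have hE : ∀ t : ℝ, HasDerivAt (fun s => x₂ s - p s) ((EuclideanSpace.equiv (Fin n) ℝ).symm (K.mulVec (x₂ t - p t)) + d t) t := by
    intro t
    have h := (hx₂' t).sub (hp' t)
    rw [add_assoc, add_sub_cancel_left] at h
    exact h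
  refine ⟨hE, ?_⟩
  intro t ht
  set M := max ‖x₂ 0 - p 0‖ (δ / (-μ)) with hM
  refine le_of_forall_pos_le_add fun ε hε => ?_
  have hM0 : 0 ≤ M := (norm_nonneg _).trans (le_max_left _ _)
  have hM1 : ‖x₂ 0 - p 0‖ ≤ M := le_max_left _ _
  have hM2 : δ ≤ M * (-μ) := (div_le_iff₀ (by linarith)).1 (le_max_right _ _)
  have key := image_le_of_deriv_right_lt_deriv_boundary (a := 0) (b := t)
    (f := fun s => ‖x₂ s - p s‖ ^ 2) (B := fun _ => (M + ε) ^ 2) (B' := fun _ => 0)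
    (fun s _ => ((hE s).norm_sq).continuousAt.continuousWithinAt)
    (fun s _ => ((hE s).norm_sq).hasDerivWithinAt)
    (by gcongr; linarith) (fun s => hasDerivAt_const _ _)
    (by
      intro s hs hfs
      dsimp only at hfs ⊢
      have hn : ‖x₂ s - p s‖ = M + ε := by
        rwa [sq_eq_sq₀ (norm_nonneg _) (by linarith)] at hfs
      have q := quad_aux n K μ hK (x₂ s - p s)
      have c := real_inner_le_norm (x₂ s - p s) (d s)
      have c2 : ‖x₂ s - p s‖ * ‖d s‖ ≤ (M + ε) * δ := by
        rw [hn]; gcongr; exact hd s hs.1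
      rw [inner_add_right]
      rw [hn] at q
      have hlt : μ * (M + ε) + δ < 0 := by nlinarith
      have hpos : 0 < M + ε := by linarith
      have := mul_neg_of_pos_of_neg hpos hlt
      have q' : inner ℝ (x₂ s - p s) ((EuclideanSpace.equiv (Fin n) ℝ).symm (K.mulVec (x₂ s - p s))) ≤ μ * (M + ε) ^ 2 := q
      nlinarith)
    ⟨ht, le_refl t⟩
  exact (sq_le_sq₀ (norm_nonneg _) (by linarith)).1 key
end
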